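/- arXiv:2010.03727 — 2 statements merged into one kernel-verified Lean document; each statement's English description precedes it below -/
import Mathlib

section
/- For every real z with 0 ≤ z ≤ 1 one has √z · ∑_{n=0}^∞ ((1/2)ₙ)³/((3/2)ₙ)² · (−z)ⁿ/n! = Li₂(−√z − √(z+1)) − Li₂(1 − √z − √(z+1)) − (1/2)·log²(√z + √(z+1)) + log(√z + √(z+1) + 1)·log(√z + √(z+1)) + π²/12. -/
noncomputable def poch (a : ℝ) (n : ℕ) : ℝ := ∏ i ∈ Finset.range n, (a + i)

/-- Dilogarithm via its integral representation, valid for all real `x ≤ 1`. -/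
noncomputable def Li2 (x : ℝ) : ℝ := -∫ t in (0:ℝ)..x, Real.log (1 - t) / t

/-!
Write `s = √z`. Integrating the binomial series of `(1 + t ^ 2) ^ (-1/2)` gives the series of
`arsinh t`; dividing by `t` and integrating once more gives `√z` times the hypergeometric series,
which is therefore `∫ t in 0..s, arsinh t / t`. The coefficients are then `O(n⁻²)`, so this remains
true at the endpoint `s = 1`. The substitution `t = sinh u` turns the integral into that of
`u * coth u`, a rational function of `w = exp u` times `log w`, whose primitive is elementary in
`Li₂(-w)`, `Li₂(1 - w)` and logarithms; at the upper limit `w = √z + √(z + 1)`. The constant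
`π ^ 2 / 12` is `-Li₂(-1)`, by the duplication formula for `Li₂` and `ζ(2) = π ^ 2 / 6`.
-/

open Real Set MeasureTheory

section TermwiseIntegration

theorem abs_lt_abs_of_mem_uIoo {t x : ℝ} (ht : t ∈ uIoo 0 x) : |t| < |x| := by
  rcases le_total 0 x with hx | hx
  · rw [uIoo_of_le hx] at ht
    rw [abs_of_pos ht.1, abs_of_nonneg hx]
    exact ht.2
  · rw [uIoo_of_ge hx] at ht
    rw [abs_of_neg ht.2, abs_of_nonpos hx]
    exact neg_lt_neg ht.1

variable {ι : Type*} [Countable ι] {c : ι → ℝ} {k : ι → ℕ} {f : ℝ → ℝ} {x : ℝ}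

theorem hasSum_integral_of_hasSum_pow
    (hf : ∀ t ∈ uIoo 0 x, HasSum (fun i ↦ c i * t ^ k i) (f t))
    (hc : Summable fun i ↦ c i * (x ^ (k i + 1) / (k i + 1))) :
    HasSum (fun i ↦ c i * (x ^ (k i + 1) / (k i + 1))) (∫ t in 0..x, f t) := by
  have hint (i : ι) : IntervalIntegrable (fun t ↦ c i * t ^ k i) volume 0 x :=
    Continuous.intervalIntegrable (by fun_prop) 0 x
  -- Monomials have constant sign between `0` and `x`, so summability at the endpoint is enough.
  have hnorm (i : ι) : ∫ t in uIoc 0 x, ‖c i * t ^ k i‖ = ‖c i * (x ^ (k i + 1) / (k i + 1))‖ := by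
    have h := integral_pow_abs_sub_uIoc (a := 0) (b := x) (n := k i)
    simp only [sub_zero] at h
    simp only [norm_mul, norm_pow, norm_div, norm_eq_abs, integral_const_mul, h]
    rw [abs_of_nonneg (by positivity : (0 : ℝ) ≤ k i + 1)]
  have hsum := hasSum_integral_of_summable_integral_norm (fun i ↦ (hint i).def')
    (by simpa only [hnorm] using hc.norm)
  have htsum : ∫ t in uIoc 0 x, ∑' i, c i * t ^ k i = ∫ t in uIoc 0 x, f t := by
    refine integral_congr_ae ?_
    rw [uIoc, ← restrict_Ioo_eq_restrict_Ioc]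
    exact (ae_restrict_mem measurableSet_Ioo).mono fun t ht ↦ (hf t ht).tsum_eq
  rw [intervalIntegral.intervalIntegral_eq_integral_uIoc, ← htsum]
  refine (hsum.const_smul (if 0 ≤ x then (1 : ℝ) else -1)).congr_fun fun i ↦ ?_
  rw [← intervalIntegral.intervalIntegral_eq_integral_uIoc, intervalIntegral.integral_const_mul,
    integral_pow, zero_pow (k i).succ_ne_zero, sub_zero]

theorem hasSum_integral_div_self_of_hasSum_pow
    (hf : ∀ t ∈ uIoo 0 x, HasSum (fun i ↦ c i * t ^ (k i + 1)) (f t))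
    (hc : Summable fun i ↦ c i * (x ^ (k i + 1) / (k i + 1))) :
    HasSum (fun i ↦ c i * (x ^ (k i + 1) / (k i + 1))) (∫ t in 0..x, f t / t) := by
  refine hasSum_integral_of_hasSum_pow (fun t ht ↦ ?_) hc
  have ht0 : t ≠ 0 := by
    rintro rfl
    exact left_notMem_uIoo ht
  simpa only [pow_succ, ← mul_assoc, mul_div_cancel_right₀ _ ht0] using (hf t ht).div_const t

theorem summable_mul_pow_div {c : ℕ → ℝ} {k : ℕ → ℕ} (hc : ∀ n, |c n| ≤ 1 / ((n : ℝ) + 1))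
    (hk : ∀ n, n ≤ k n) (hx : |x| ≤ 1) : Summable fun n ↦ c n * (x ^ (k n + 1) / (k n + 1)) := by
  have hsq : Summable fun n : ℕ ↦ 1 / ((n : ℝ) + 1) ^ 2 := by
    exact_mod_cast (summable_nat_add_iff 1).2 hasSum_zeta_two.summable
  refine hsq.of_norm_bounded fun n ↦ ?_
  have hkn : (n : ℝ) ≤ k n := mod_cast hk n
  calc ‖c n * (x ^ (k n + 1) / (k n + 1))‖
      = |c n| * (|x| ^ (k n + 1) / (k n + 1)) := by
        rw [norm_mul, norm_div, norm_pow, norm_eq_abs, norm_eq_abs,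
          norm_of_nonneg (by positivity : (0 : ℝ) ≤ k n + 1)]
    _ ≤ 1 / ((n : ℝ) + 1) * (1 / (n + 1)) := by
        gcongr
        exacts [hc n, pow_le_one₀ (abs_nonneg x) hx]
    _ = 1 / ((n : ℝ) + 1) ^ 2 := by rw [← sq, one_div_pow]

end TermwiseIntegration

section DivSelf

variable {f : ℝ → ℝ} {s : Set ℝ} {x : ℝ}

theorem dslope_zero_of_ne (hf : f 0 = 0) (hx : x ≠ 0) : dslope f 0 x = f x / x := by
  rw [dslope_of_ne f hx, slope_def_field, hf, sub_zero, sub_zero]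

-- `dslope f 0` is continuous at `0`, where `f t / t` takes the junk value `0`.
theorem integral_div_self_eq_integral_dslope (hf : f 0 = 0) (a b : ℝ) :
    ∫ t in a..b, f t / t = ∫ t in a..b, dslope f 0 t :=
  intervalIntegral.integral_congr_ae <|
    (volume.ae_ne 0).mono fun _ ht _ ↦ (dslope_zero_of_ne hf ht).symm

theorem hasDerivAt_integral_div_self (hs : IsOpen s) [hs' : s.OrdConnected] (h0 : 0 ∈ s)
    (hfc : ContinuousOn f s) (hfd : DifferentiableAt ℝ f 0) (hf : f 0 = 0) (hx : x ∈ s) :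
    HasDerivAt (fun x ↦ ∫ t in 0..x, f t / t) (dslope f 0 x) x := by
  have hcont : ContinuousOn (dslope f 0) s :=
    (continuousOn_dslope (hs.mem_nhds h0)).2 ⟨hfc, hfd⟩
  simp only [integral_div_self_eq_integral_dslope hf]
  exact intervalIntegral.integral_hasDerivAt_right
    (hcont.mono (hs'.uIcc_subset h0 hx)).intervalIntegrable
    (hcont.stronglyMeasurableAtFilter hs x hx) (hcont.continuousAt (hs.mem_nhds hx))

end DivSelf

section Dilogarithm

variable {x : ℝ}

theorem Li2_zero : Li2 0 = 0 := by simp [Li2]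

theorem hasDerivAt_Li2_dslope (hx : x < 1) :
    HasDerivAt Li2 (-dslope (fun t ↦ log (1 - t)) 0 x) x := by
  refine (hasDerivAt_integral_div_self isOpen_Iio (mem_Iio.2 one_pos) ?_ ?_ (by simp) hx).neg
  · exact ContinuousOn.log (by fun_prop) fun t ht ↦ sub_ne_zero.2 (ne_of_gt ht)
  · exact DifferentiableAt.log (by fun_prop) (by norm_num)

theorem hasDerivAt_Li2 (hx : x < 1) (hx0 : x ≠ 0) : HasDerivAt Li2 (-log (1 - x) / x) x := by
  simpa only [dslope_zero_of_ne (f := fun t ↦ log (1 - t)) (by simp) hx0, neg_div]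
    using hasDerivAt_Li2_dslope hx

theorem continuousOn_Li2 : ContinuousOn Li2 (Iio 1) := fun _ hx ↦
  (hasDerivAt_Li2_dslope hx).continuousAt.continuousWithinAt

theorem hasSum_Li2 (hx : |x| ≤ 1) : HasSum (fun n : ℕ ↦ x ^ (n + 1) / (n + 1) ^ 2) (Li2 x) := by
  have hlog : ∀ t ∈ uIoo 0 x, HasSum (fun n : ℕ ↦ -(1 / (n + 1)) * t ^ (n + 1)) (log (1 - t)) :=
    fun t ht ↦ by
      simpa [neg_div, div_eq_inv_mul] using
        (hasSum_pow_div_log_of_abs_lt_one ((abs_lt_abs_of_mem_uIoo ht).trans_le hx)).neg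
  have hsum := summable_mul_pow_div (c := fun n ↦ -(1 / ((n : ℝ) + 1))) (k := id)
    (fun n ↦ by rw [abs_neg, abs_of_nonneg (by positivity)]) (fun _ ↦ le_rfl) hx
  refine (hasSum_integral_div_self_of_hasSum_pow hlog hsum).neg.congr_fun fun n ↦ ?_
  field_simp

theorem Li2_one : Li2 1 = π ^ 2 / 6 := by
  have hzeta := (hasSum_nat_add_iff' 1).2 hasSum_zeta_two
  have hLi2 := hasSum_Li2 (x := 1) (by simp)
  refine hLi2.unique ?_
  simpa using hzeta

theorem Li2_add_Li2_neg (hx : |x| ≤ 1) : Li2 x + Li2 (-x) = Li2 (x ^ 2) / 2 := by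
  have hadd := (hasSum_Li2 hx).add (hasSum_Li2 ((abs_neg x).trans_le hx))
  have hsq := (hasSum_Li2 (x := x ^ 2) (by simpa [abs_pow] using hx)).div_const 2
  refine hadd.unique ?_
  rw [← zero_add (Li2 (x ^ 2) / 2)]
  refine HasSum.even_add_odd ?_ ?_
  · refine hasSum_zero.congr_fun fun n ↦ ?_
    rw [(odd_two_mul_add_one n).neg_pow]
    ring
  · refine hsq.congr_fun fun n ↦ ?_
    have heven : Even (2 * n + 1 + 1) := by grind
    rw [heven.neg_pow]
    push_cast
    field_simp
    ring

theorem Li2_neg_one : Li2 (-1) = -(π ^ 2 / 12) := by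
  have h := Li2_add_Li2_neg (x := 1) (by simp)
  rw [one_pow, Li2_one] at h
  linarith

end Dilogarithm

section Binomial

variable {a : ℝ}

theorem poch_pos (ha : 0 < a) (n : ℕ) : 0 < poch a n :=
  Finset.prod_pos fun _ _ ↦ by positivity

theorem poch_mul_add (a : ℝ) (n : ℕ) : poch a n * (a + n) = a * poch (a + 1) n := by
  have h := Finset.prod_range_succ' (fun i : ℕ ↦ a + i) n
  rw [Finset.prod_range_succ] at h
  simpa [poch, add_assoc, add_comm (1 : ℝ), mul_comm a] using h

theorem poch_eq_smeval_ascPochhammer (a : ℝ) (n : ℕ) :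
    poch a n = (ascPochhammer ℕ n).smeval a := by
  induction n with
  | zero => simp [poch]
  | succ n ih =>
    rw [poch, Finset.prod_range_succ, ← poch, ih, ascPochhammer_succ_right,
      Polynomial.smeval_mul, Polynomial.smeval_add, Polynomial.smeval_X,
      Polynomial.smeval_natCast, pow_one, pow_zero, nsmul_one]

theorem choose_neg_eq_poch (a : ℝ) (n : ℕ) :
    Ring.choose (-a) n = (-1) ^ n * (poch a n / n.factorial) := by
  have h := Ring.factorial_nsmul_multichoose_eq_ascPochhammer a n
  rw [← poch_eq_smeval_ascPochhammer, nsmul_eq_mul] at h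
  rw [Ring.choose_neg', ← h, mul_div_cancel_left₀ _ (by positivity)]
  simp [Int.negOnePow_def, Units.smul_def]

theorem abs_choose_neg_le_one (ha0 : 0 < a) (ha1 : a ≤ 1) (n : ℕ) : |Ring.choose (-a) n| ≤ 1 := by
  have hle : poch a n ≤ n.factorial := by
    rw [poch, ← Finset.prod_range_add_one_eq_factorial, Nat.cast_prod]
    push_cast
    exact Finset.prod_le_prod (fun _ _ ↦ by positivity) fun i _ ↦ by linarith
  have hpos := poch_pos ha0 n
  rw [choose_neg_eq_poch, abs_mul, abs_neg_one_pow, one_mul, abs_of_pos (by positivity)]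
  exact div_le_one_of_le₀ hle (by positivity)

theorem hasSum_choose_mul_pow (a : ℝ) {x : ℝ} (hx : |x| < 1) :
    HasSum (fun n ↦ Ring.choose a n * x ^ n) ((1 + x) ^ a) := by
  have h := (one_add_rpow_hasFPowerSeriesOnBall_zero (a := a)).hasSum
    (y := x) (by simpa [← ofReal_norm] using hx)
  simpa [binomialSeries, FormalMultilinearSeries.ofScalars, mul_comm] using h

theorem threeF2_term_eq (ha : 0 < a) (x : ℝ) (n : ℕ) :
    poch a n ^ 3 / poch (a + 1) n ^ 2 * (-x) ^ n / n.factorial =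
      (a / (a + n)) ^ 2 * (Ring.choose (-a) n * x ^ n) := by
  have hpos := poch_pos (by positivity : 0 < a + 1) n
  have hratio : poch a n / poch (a + 1) n = a / (a + n) := by
    rw [div_eq_div_iff hpos.ne' (by positivity), poch_mul_add]
  rw [choose_neg_eq_poch, ← hratio, neg_pow x]
  ring

end Binomial

section ArsinhSeries

variable {x : ℝ}

theorem hasSum_inv_sqrt_one_add_sq (hx : |x| < 1) :
    HasSum (fun n ↦ Ring.choose (-(1 / 2) : ℝ) n * x ^ (2 * n)) (√(1 + x ^ 2))⁻¹ := by
  have hx2 : |x ^ 2| < 1 := by simpa using hx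
  simpa only [pow_mul, rpow_neg (by positivity : 0 ≤ 1 + x ^ 2), ← sqrt_eq_rpow]
    using hasSum_choose_mul_pow (-(1 / 2)) hx2

theorem integral_inv_sqrt_one_add_sq (x : ℝ) : ∫ t in 0..x, (√(1 + t ^ 2))⁻¹ = arsinh x := by
  have hcont : Continuous fun t : ℝ ↦ (√(1 + t ^ 2))⁻¹ :=
    Continuous.inv₀ (by fun_prop) fun t ↦ by positivity
  rw [intervalIntegral.integral_eq_sub_of_hasDerivAt (fun t _ ↦ hasDerivAt_arsinh t)
    (hcont.intervalIntegrable 0 x), arsinh_zero, sub_zero]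

theorem hasSum_arsinh (hx : |x| < 1) :
    HasSum (fun n : ℕ ↦ Ring.choose (-(1 / 2) : ℝ) n * (x ^ (2 * n + 1) / ((2 * n : ℕ) + 1)))
      (arsinh x) := by
  rw [← integral_inv_sqrt_one_add_sq]
  refine hasSum_integral_of_hasSum_pow
    (fun t ht ↦ hasSum_inv_sqrt_one_add_sq ((abs_lt_abs_of_mem_uIoo ht).trans hx)) ?_
  refine (summable_geometric_of_lt_one (abs_nonneg x) hx).of_norm_bounded fun n ↦ ?_
  calc ‖Ring.choose (-(1 / 2) : ℝ) n * (x ^ (2 * n + 1) / ((2 * n : ℕ) + 1))‖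
      = |Ring.choose (-(1 / 2) : ℝ) n| * (|x| ^ (2 * n + 1) / ((2 * n : ℕ) + 1)) := by
        rw [norm_mul, norm_div, norm_pow, norm_eq_abs, norm_eq_abs,
          norm_of_nonneg (by positivity : (0 : ℝ) ≤ (2 * n : ℕ) + 1)]
    _ ≤ 1 * (|x| ^ n / 1) := by
        gcongr ?_ * (?_ / ?_)
        · exact abs_choose_neg_le_one one_half_pos one_half_lt_one.le n
        · exact pow_le_pow_of_le_one (abs_nonneg x) hx.le (by lia)
        · exact le_add_of_nonneg_left (Nat.cast_nonneg _)
    _ = |x| ^ n := by rw [one_mul, div_one]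

theorem hasSum_integral_arsinh_div_self (hx : |x| ≤ 1) :
    HasSum (fun n : ℕ ↦ Ring.choose (-(1 / 2) : ℝ) n * x ^ (2 * n + 1) / (2 * n + 1) ^ 2)
      (∫ t in 0..x, arsinh t / t) := by
  have hcoeff (n : ℕ) : |Ring.choose (-(1 / 2) : ℝ) n / ((2 * n : ℕ) + 1)| ≤ 1 / ((n : ℝ) + 1) := by
    rw [abs_div, abs_of_nonneg (by positivity : 0 ≤ ((2 * n : ℕ) : ℝ) + 1)]
    gcongr
    exacts [abs_choose_neg_le_one one_half_pos one_half_lt_one.le n, by lia]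
  have hsum := summable_mul_pow_div hcoeff (k := (2 * ·)) (fun n ↦ by lia) hx
  have harsinh : ∀ t ∈ uIoo 0 x, HasSum (fun n : ℕ ↦
      Ring.choose (-(1 / 2) : ℝ) n / ((2 * n : ℕ) + 1) * t ^ (2 * n + 1)) (arsinh t) := fun t ht ↦
    (hasSum_arsinh ((abs_lt_abs_of_mem_uIoo ht).trans_le hx)).congr_fun fun n ↦ by ring
  refine (hasSum_integral_div_self_of_hasSum_pow harsinh hsum).congr_fun fun n ↦ ?_
  push_cast
  field_simp

end ArsinhSeries

section ArsinhIntegral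

/-- The primitive of `u * coth u` vanishing at `0`, in the closed form that becomes the right-hand
side of the theorem at `u = log (√z + √(z + 1))`. -/
noncomputable def mulCothPrimitive (u : ℝ) : ℝ :=
  Li2 (-exp u) - Li2 (1 - exp u) - 1 / 2 * u ^ 2 + log (exp u + 1) * u + π ^ 2 / 12

theorem mulCothPrimitive_zero : mulCothPrimitive 0 = 0 := by
  simp [mulCothPrimitive, Li2_neg_one, Li2_zero]

theorem continuous_mulCothPrimitive : Continuous mulCothPrimitive := by
  have h₁ : Continuous fun u ↦ Li2 (-exp u) :=
    continuousOn_Li2.comp_continuous (by fun_prop) fun u ↦ mem_Iio.2 (by linarith [exp_pos u])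
  have h₂ : Continuous fun u ↦ Li2 (1 - exp u) :=
    continuousOn_Li2.comp_continuous (by fun_prop) fun u ↦ mem_Iio.2 (by linarith [exp_pos u])
  have h₃ : Continuous fun u ↦ log (exp u + 1) :=
    Continuous.log (by fun_prop) fun u ↦ by positivity
  unfold mulCothPrimitive
  fun_prop

theorem hasDerivAt_mulCothPrimitive {u : ℝ} (hu : u ≠ 0) :
    HasDerivAt mulCothPrimitive (u * cosh u / sinh u) u := by
  have hw : 0 < exp u := exp_pos u
  have hw1 : exp u - 1 ≠ 0 := by simpa [sub_eq_zero] using hu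
  have h₁ : HasDerivAt (fun u ↦ Li2 (-exp u)) (-log (1 + exp u)) u := by
    refine ((hasDerivAt_Li2 (by linarith) (by linarith)).comp u
      (hasDerivAt_exp u).fun_neg).congr_deriv ?_
    rw [sub_neg_eq_add]
    field_simp
  have h₂ : HasDerivAt (fun u ↦ Li2 (1 - exp u)) (-(u * exp u / (exp u - 1))) u := by
    have hne : 1 - exp u ≠ 0 := by rwa [← neg_ne_zero, neg_sub]
    refine ((hasDerivAt_Li2 (by linarith) hne).comp u
      ((hasDerivAt_exp u).const_sub 1)).congr_deriv ?_
    rw [sub_sub_cancel, log_exp, ← neg_sub (exp u) 1]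
    field_simp
  have h₃ : HasDerivAt (fun u ↦ log (exp u + 1)) (exp u / (exp u + 1)) u :=
    ((hasDerivAt_exp u).add_const 1).log (by positivity)
  have h₄ : HasDerivAt (fun u : ℝ ↦ 1 / 2 * u ^ 2) u u :=
    ((hasDerivAt_pow 2 u).const_mul (1 / 2)).congr_deriv (by ring)
  refine ((((h₁.sub h₂).sub h₄).add (h₃.mul (hasDerivAt_id u))).add_const _).congr_deriv ?_
  have hcosh : cosh u = (exp u ^ 2 + 1) / (2 * exp u) := by
    rw [cosh_eq, exp_neg]
    field_simp
  have hsinh : sinh u = (exp u - 1) * (exp u + 1) / (2 * exp u) := by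
    rw [sinh_eq, exp_neg]
    field_simp
    ring
  rw [hcosh, hsinh, add_comm 1 (exp u), id]
  field_simp
  ring

theorem integral_arsinh_div_self (x : ℝ) :
    ∫ t in 0..x, arsinh t / t = mulCothPrimitive (arsinh x) := by
  have hderiv : ∀ t ∈ Ioo (min 0 x) (max 0 x) \ {0},
      HasDerivAt (mulCothPrimitive ∘ arsinh) (dslope arsinh 0 t) t := fun t ⟨_, ht⟩ ↦ by
    refine ((hasDerivAt_mulCothPrimitive (arsinh_eq_zero_iff.not.2 ht)).comp t
      (hasDerivAt_arsinh t)).congr_deriv ?_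
    rw [dslope_zero_of_ne arsinh_zero ht, cosh_arsinh, sinh_arsinh]
    field_simp
  have hcont : Continuous (dslope arsinh 0) :=
    continuousOn_univ.1 <| (continuousOn_dslope Filter.univ_mem).2
      ⟨continuous_arsinh.continuousOn, differentiable_arsinh 0⟩
  rw [integral_div_self_eq_integral_dslope arsinh_zero, integral_eq_of_hasDerivAt_off_countable
    (mulCothPrimitive ∘ arsinh) _ (countable_singleton 0)
    (continuous_mulCothPrimitive.comp continuous_arsinh).continuousOn hderiv
    (hcont.intervalIntegrable 0 x)]
  simp [mulCothPrimitive_zero]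

end ArsinhIntegral

theorem threeF2_half_polylog (z : ℝ) (hz0 : 0 ≤ z) (hz1 : z ≤ 1) :
    Real.sqrt z * ∑' n : ℕ,
        (poch (1/2) n)^3 / ((poch (3/2) n)^2) * (-z) ^ n / (Nat.factorial n) =
      Li2 (-Real.sqrt z - Real.sqrt (z + 1))
        - Li2 (1 - Real.sqrt z - Real.sqrt (z + 1))
        - (1/2) * (Real.log (Real.sqrt z + Real.sqrt (z + 1)))^2
        + Real.log (Real.sqrt z + Real.sqrt (z + 1) + 1)
            * Real.log (Real.sqrt z + Real.sqrt (z + 1))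
        + Real.pi^2 / 12 := by
  have hsqrt : |√z| ≤ 1 := by rwa [abs_of_nonneg (sqrt_nonneg z), sqrt_le_one]
  have hexp : exp (arsinh √z) = √z + √(z + 1) := by
    rw [exp_arsinh, sq_sqrt hz0, add_comm 1 z]
  have hseries : √z * ∑' n : ℕ, poch (1 / 2) n ^ 3 / poch (3 / 2) n ^ 2 * (-z) ^ n / n.factorial =
      ∫ t in 0..√z, arsinh t / t := by
    rw [← (hasSum_integral_arsinh_div_self hsqrt).tsum_eq, ← tsum_mul_left]
    refine tsum_congr fun n ↦ ?_
    rw [show (3 / 2 : ℝ) = 1 / 2 + 1 by norm_num, threeF2_term_eq one_half_pos, pow_succ √z,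
      pow_mul, sq_sqrt hz0]
    field_simp
    ring
  have hlog : arsinh √z = log (√z + √(z + 1)) := by rw [← hexp, log_exp]
  rw [hseries, integral_arsinh_div_self, mulCothPrimitive, hexp, hlog, neg_add',
    sub_add_eq_sub_sub]
end

section
/- ₃F₂(1/2, 1/2−a, a+1/2; 1−a, a+1; 1) = π² a csc(πa) / (Γ(3/4)² Γ(3/4−a) Γ(a+3/4)) for every real a with 0 < a < 1/4. -/
/-!
The series is well-poised, so it is an instance of Dixon's theorem (`hasSum_wellPoisedTerm`), which
Wilf–Zeilberger summation proves. Let `F x` be the well-poised series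
`₃F₂(x, b, c; 1 + x - b, 1 + x - c; 1)`. The terms at `x` minus a rational multiple `R x` of the
terms at `x + 2` telescope, so `F x = R x * F (x + 2)`. Since `F y → 1` as `y → ∞` by dominated
convergence, `F x` is the infinite product of the `R (x + 2 * j)`, which Euler's limit formula
evaluates by Gamma functions.
-/

open Filter Topology

section Poch

theorem poch_zero (s : ℝ) : poch s 0 = 1 := Finset.prod_range_zero _

theorem poch_succ (s : ℝ) (n : ℕ) : poch s (n + 1) = poch s n * (s + n) :=
  Finset.prod_range_succ _ _

theorem poch_one (n : ℕ) : poch 1 n = n.factorial := by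
  rw [poch, ← Finset.prod_range_add_one_eq_factorial]
  push_cast
  exact Finset.prod_congr rfl fun i _ => add_comm _ _

theorem ne_neg_natCast_of_pos {s : ℝ} (hs : 0 < s) (m : ℕ) : s ≠ -m :=
  ((neg_nonpos.2 m.cast_nonneg).trans_lt hs).ne'

theorem add_natCast_ne_zero {s : ℝ} (hs : ∀ m : ℕ, s ≠ -m) (n : ℕ) : s + n ≠ 0 :=
  fun h => hs n (eq_neg_of_add_eq_zero_left h)

theorem add_natCast_ne_neg_natCast {s : ℝ} (hs : ∀ m : ℕ, s ≠ -m) (n m : ℕ) : s + n ≠ -m := by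
  have h := add_natCast_ne_zero hs (n + m)
  contrapose! h
  push_cast
  linarith

theorem mul_poch_add_one (s : ℝ) (n : ℕ) : s * poch (s + 1) n = poch s n * (s + n) := by
  induction n with
  | zero => simp [poch_zero]
  | succ n ih =>
    rw [poch_succ, poch_succ, ← mul_assoc, ih]
    push_cast
    ring

theorem poch_add_two {s : ℝ} (hs : ∀ m : ℕ, s ≠ -m) (n : ℕ) :
    poch (s + 2) n = poch s n * ((s + n) * (s + n + 1) / (s * (s + 1))) := by
  have h₀ : s ≠ 0 := by simpa using add_natCast_ne_zero hs 0
  have h₁ : s + 1 ≠ 0 := by simpa using add_natCast_ne_zero hs 1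
  have e₀ := mul_poch_add_one s n
  have e₁ := mul_poch_add_one (s + 1) n
  rw [add_assoc, one_add_one_eq_two] at e₁
  rw [← mul_div_assoc, eq_div_iff (mul_ne_zero h₀ h₁)]
  linear_combination s * e₁ + (s + 1 + n) * e₀

end Poch

section Asymptotics

-- At a pole of `Γ` both `GammaSeq s n` (for large `n`) and `Γ s` take the junk value `0`, whose
-- inverse `0` is the true value of the entire function `1 / Γ`.
theorem tendsto_inv_GammaSeq (s : ℝ) :
    Tendsto (fun n => (Real.GammaSeq s n)⁻¹) atTop (𝓝 (Real.Gamma s)⁻¹) := by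
  by_cases hs : ∀ m : ℕ, s ≠ -m
  · exact (Real.GammaSeq_tendsto_Gamma s).inv₀ (Real.Gamma_ne_zero hs)
  · push Not at hs
    obtain ⟨m, rfl⟩ := hs
    refine tendsto_const_nhds.congr' ?_
    filter_upwards [eventually_ge_atTop m] with n hn
    have hzero : ∏ j ∈ Finset.range (n + 1), (-(m : ℝ) + j) = 0 :=
      Finset.prod_eq_zero (Finset.mem_range_succ_iff.2 hn) (neg_add_cancel _)
    rw [Real.Gamma_neg_nat_eq_zero, Real.GammaSeq, hzero, div_zero]

theorem tendsto_poch_div_poch_mul_rpow (s t : ℝ) :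
    Tendsto (fun n : ℕ => poch s (n + 1) / poch t (n + 1) * (n : ℝ) ^ (t - s)) atTop
      (𝓝 (Real.Gamma t / Real.Gamma s)) := by
  refine ((Real.GammaSeq_tendsto_Gamma t).mul (tendsto_inv_GammaSeq s)).congr' ?_
  filter_upwards [eventually_gt_atTop 0] with n hn
  have hn' : (0 : ℝ) < n := Nat.cast_pos.2 hn
  rw [Real.rpow_sub hn', Real.GammaSeq, Real.GammaSeq, ← poch, ← poch]
  field_simp

theorem tendsto_prod_poch_div_poch_mul_rpow {ι : Type*} [Fintype ι] (u v : ι → ℝ) :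
    Tendsto (fun n : ℕ => (∏ i, poch (u i) (n + 1) / poch (v i) (n + 1)) *
        (n : ℝ) ^ (∑ i, (v i - u i))) atTop
      (𝓝 (∏ i, Real.Gamma (v i) / Real.Gamma (u i))) := by
  refine (tendsto_finsetProd Finset.univ fun i _ =>
    tendsto_poch_div_poch_mul_rpow (u i) (v i)).congr' ?_
  filter_upwards [eventually_gt_atTop 0] with n hn
  rw [Real.rpow_sum_of_pos (Nat.cast_pos.2 hn), Finset.prod_mul_distrib]

end Asymptotics

/-- The `n`-th term of the well-poised series `₃F₂(x, b, c; 1 + x - b, 1 + x - c; 1)`. -/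
noncomputable def wellPoisedTerm (x b c : ℝ) (n : ℕ) : ℝ :=
  poch x n * poch b n * poch c n / (poch (1 + x - b) n * poch (1 + x - c) n * n.factorial)

section Convergence

variable (x b c : ℝ)

theorem wellPoisedTerm_zero : wellPoisedTerm x b c 0 = 1 := by
  simp [wellPoisedTerm, poch_zero]

theorem wellPoisedTerm_succ (n : ℕ) :
    wellPoisedTerm x b c (n + 1) = wellPoisedTerm x b c n *
      ((x + n) / ((1 + x - b + n) * (1 + x - c + n)) * ((b + n) * (c + n) / (n + 1))) := by
  simp only [wellPoisedTerm, poch_succ, Nat.factorial_succ, Nat.cast_mul, Nat.cast_succ]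
  rw [div_mul_div_comm, div_mul_div_comm]
  congr 1 <;> ring

theorem wellPoisedTerm_succ_isBigO :
    (fun n => wellPoisedTerm x b c (n + 1)) =O[atTop]
      fun n : ℕ => (n : ℝ) ^ (-(3 + x - 2 * b - 2 * c)) := by
  have hlim := tendsto_prod_poch_div_poch_mul_rpow ![x, b, c] ![1 + x - b, 1 + x - c, 1]
  refine ((hlim.isBigO_one ℝ).mul (Asymptotics.isBigO_refl
    (fun n : ℕ => (n : ℝ) ^ (-(3 + x - 2 * b - 2 * c))) atTop)).congr' ?_ (by simp)
  filter_upwards [eventually_gt_atTop 0] with n hn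
  have hexp : ∑ i, (![1 + x - b, 1 + x - c, 1] i - ![x, b, c] i) = 3 + x - 2 * b - 2 * c := by
    simp only [Fin.sum_univ_three, Matrix.cons_val]
    ring
  rw [hexp, mul_assoc, ← Real.rpow_add (Nat.cast_pos.2 hn), add_neg_cancel, Real.rpow_zero,
    mul_one, wellPoisedTerm, ← poch_one]
  simp [Fin.prod_univ_three]

variable {x b c}

theorem summable_wellPoisedTerm (h : 0 < 2 + x - 2 * b - 2 * c) :
    Summable (wellPoisedTerm x b c) :=
  (summable_nat_add_iff 1).1 <| summable_of_isBigO_nat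
    (Real.summable_nat_rpow.2 (by linarith)) (wellPoisedTerm_succ_isBigO x b c)

theorem tendsto_natCast_mul_wellPoisedTerm (h : 0 < 2 + x - 2 * b - 2 * c) :
    Tendsto (fun n : ℕ => n * wellPoisedTerm x b c n) atTop (𝓝 0) := by
  have hO : (fun n : ℕ => n * wellPoisedTerm x b c (n + 1)) =O[atTop]
      fun n : ℕ => (n : ℝ) ^ (-(2 + x - 2 * b - 2 * c)) := by
    refine ((Asymptotics.isBigO_refl (fun n : ℕ => (n : ℝ)) atTop).mul
      (wellPoisedTerm_succ_isBigO x b c)).congr_right fun n => ?_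
    rw [← Real.rpow_one_add' n.cast_nonneg (by linarith)]
    ring_nf
  have hmul := hO.trans_tendsto ((tendsto_rpow_neg_atTop h).comp tendsto_natCast_atTop_atTop)
  have hterm := (summable_nat_add_iff 1).2 (summable_wellPoisedTerm h) |>.tendsto_atTop_zero
  refine (tendsto_add_atTop_iff_nat 1).1 ?_
  simpa [add_mul] using hmul.add hterm

end Convergence

section LargeParameter

variable {x b c : ℝ}

theorem abs_wellPoisedTerm_le_of_le {y : ℝ} (hx : 0 < x) (hxb : 0 < 1 + x - b)
    (hxc : 0 < 1 + x - c) (hbc : (1 - b) * (1 - c) ≤ x ^ 2) (hxy : x ≤ y) (n : ℕ) :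
    |wellPoisedTerm y b c n| ≤ |wellPoisedTerm x b c n| := by
  induction n with
  | zero => simp only [wellPoisedTerm_zero, le_refl]
  | succ n ih =>
    have hn : (0 : ℝ) ≤ n := n.cast_nonneg
    have hfactor : (y + n) / ((1 + y - b + n) * (1 + y - c + n)) ≤
        (x + n) / ((1 + x - b + n) * (1 + x - c + n)) := by
      have h₁ : 0 < 1 + y - b + n := by linarith
      have h₂ : 0 < 1 + y - c + n := by linarith
      rw [div_le_div_iff₀ (by positivity) (by positivity)]
      have hsq : x ^ 2 ≤ (x + n) * (y + n) := by nlinarith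
      -- The two sides differ by `(y - x) * ((x + n) * (y + n) - (1 - b) * (1 - c))`.
      linarith [mul_nonneg (sub_nonneg.2 hxy) (sub_nonneg.2 (hbc.trans hsq))]
    have hnonneg : 0 ≤ (y + n) / ((1 + y - b + n) * (1 + y - c + n)) :=
      div_nonneg (by linarith) (mul_nonneg (by linarith) (by linarith))
    rw [wellPoisedTerm_succ, wellPoisedTerm_succ, abs_mul, abs_mul, abs_mul, abs_mul,
      abs_of_nonneg hnonneg, abs_of_nonneg (hnonneg.trans hfactor)]
    gcongr

theorem tendsto_div_mul_add_atTop (p q : ℝ) :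
    Tendsto (fun y : ℝ => y / ((y + p) * (y + q))) atTop (𝓝 0) := by
  have hinv (r : ℝ) : Tendsto (fun y : ℝ => (y + r)⁻¹) atTop (𝓝 0) :=
    tendsto_inv_atTop_zero.comp (tendsto_atTop_add_const_right _ r tendsto_id)
  have hlim := (hinv q).sub (((hinv p).mul (hinv q)).const_mul p)
  rw [mul_zero, mul_zero, sub_zero] at hlim
  refine hlim.congr' ?_
  filter_upwards [eventually_gt_atTop (-p), eventually_gt_atTop (-q)] with y hp hq
  have : y + p ≠ 0 := by linarith
  have : y + q ≠ 0 := by linarith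
  field_simp
  ring

theorem tendsto_wellPoisedTerm_atTop (b c : ℝ) (n : ℕ) :
    Tendsto (fun y => wellPoisedTerm y b c n) atTop (𝓝 (if n = 0 then 1 else 0)) := by
  induction n with
  | zero => simp [wellPoisedTerm_zero]
  | succ n ih =>
    have hfactor : Tendsto (fun y : ℝ => (y + n) / ((1 + y - b + n) * (1 + y - c + n))) atTop
        (𝓝 0) := by
      refine ((tendsto_div_mul_add_atTop (1 - b) (1 - c)).comp
        (tendsto_atTop_add_const_right _ (n : ℝ) tendsto_id)).congr fun y => ?_
      simp only [Function.comp_apply, id_eq]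
      ring_nf
    simp only [wellPoisedTerm_succ, Nat.add_eq_zero_iff, one_ne_zero, and_false, if_false]
    simpa using ih.mul (hfactor.mul_const ((b + n) * (c + n) / (n + 1)))

theorem tendsto_tsum_wellPoisedTerm_atTop (b c : ℝ) :
    Tendsto (fun y => ∑' n, wellPoisedTerm y b c n) atTop (𝓝 1) := by
  have hlarge (r : ℝ) : ∀ᶠ x : ℝ in atTop, r < x := eventually_gt_atTop r
  obtain ⟨x, hx, hb, hc, hbc, hconv⟩ := ((hlarge 1).and <| (hlarge (b - 1)).and <|
    (hlarge (c - 1)).and <| (hlarge ((1 - b) * (1 - c))).and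
    (hlarge (2 * b + 2 * c - 2))).exists
  have hdom : Summable fun n => |wellPoisedTerm x b c n| :=
    (summable_wellPoisedTerm (by linarith)).abs
  have hlim := tendsto_tsum_of_dominated_convergence hdom (tendsto_wellPoisedTerm_atTop b c)
    ((eventually_ge_atTop x).mono fun y hxy n => abs_wellPoisedTerm_le_of_le (by linarith)
      (by linarith) (by linarith) (by nlinarith) hxy n)
  rwa [tsum_ite_eq 0 fun _ => (1 : ℝ)] at hlim

end LargeParameter

/-- The numerator factors of `dixonRatio`, halved so that `x ↦ x + 2` adds `1` to each of them. -/
noncomputable def dixonNum (x b c : ℝ) : Fin 5 → ℝ :=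
  ![(1 + x) / 2, 1 + x / 2 - b, 1 + x / 2 - c, (1 + x - b - c) / 2, 1 + (x - b - c) / 2]

/-- The denominator factors of `dixonRatio`, halved so that `x ↦ x + 2` adds `1` to each of them. -/
noncomputable def dixonDen (x b c : ℝ) : Fin 5 → ℝ :=
  ![(1 + x - b) / 2, 1 + (x - b) / 2, (1 + x - c) / 2, 1 + (x - c) / 2, 1 + x / 2 - b - c]

/-- The factor relating the values of the well-poised series at `x` and at `x + 2`. -/
noncomputable def dixonRatio (x b c : ℝ) : ℝ := ∏ i, dixonNum x b c i / dixonDen x b c i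

/-- The Wilf–Zeilberger certificate of Dixon's theorem: its differences in `n` are
`wellPoisedTerm x b c n - dixonRatio x b c * wellPoisedTerm (x + 2) b c n`. -/
noncomputable def dixonCertificate (x b c : ℝ) (n : ℕ) : ℝ :=
  -(n * wellPoisedTerm x b c n *
    (((x + n) * (x + n + (2 + x - 2 * b - 2 * c) + 1) / (2 + x - 2 * b - 2 * c)
      - (1 - b) * (1 - c) / x) / ((1 + x - b + n) * (1 + x - c + n))))

section Telescoping

variable {x b c : ℝ}

theorem dixonRatio_eq (x b c : ℝ) :
    dixonRatio x b c =
      (x + 1) * ((2 + x - 2 * b) * (2 + x - 2 * c) * (1 + x - b - c) * (2 + x - b - c)) /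
        ((2 + x - 2 * b - 2 * c) * ((1 + x - b) * (1 + x - b + 1))
          * ((1 + x - c) * (1 + x - c + 1))) := by
  rw [← mul_div_mul_left _ _ (show (1 / 2 ^ 5 : ℝ) ≠ 0 by norm_num), dixonRatio,
    Finset.prod_div_distrib]
  congr 1 <;> simp only [Fin.prod_univ_five, dixonNum, dixonDen, Matrix.cons_val] <;> ring

theorem wellPoisedTerm_add_two (hx : ∀ m : ℕ, x ≠ -m)
    (hb : ∀ m : ℕ, 1 + x - b ≠ -m) (hc : ∀ m : ℕ, 1 + x - c ≠ -m) (n : ℕ) :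
    wellPoisedTerm (x + 2) b c n = wellPoisedTerm x b c n *
      ((x + n) * (x + n + 1) / (x * (x + 1)) /
        ((1 + x - b + n) * (1 + x - b + n + 1) / ((1 + x - b) * (1 + x - b + 1)) *
          ((1 + x - c + n) * (1 + x - c + n + 1) / ((1 + x - c) * (1 + x - c + 1))))) := by
  rw [wellPoisedTerm, wellPoisedTerm, ← mul_div_mul_comm, ← add_assoc, add_sub_right_comm _ 2 b,
    add_sub_right_comm _ 2 c, poch_add_two hx, poch_add_two hb, poch_add_two hc]
  congr 1 <;> ring

theorem dixonRatio_mul_wellPoisedTerm_add_two (hx : ∀ m : ℕ, x ≠ -m)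
    (hb : ∀ m : ℕ, 1 + x - b ≠ -m) (hc : ∀ m : ℕ, 1 + x - c ≠ -m) (n : ℕ) :
    dixonRatio x b c * wellPoisedTerm (x + 2) b c n = wellPoisedTerm x b c n *
      ((2 + x - 2 * b) * (2 + x - 2 * c) * (1 + x - b - c) * (2 + x - b - c)
          * ((x + n) * (x + n + 1))
        / (x * (2 + x - 2 * b - 2 * c) * ((1 + x - b + n) * (1 + x - b + n + 1))
          * ((1 + x - c + n) * (1 + x - c + n + 1)))) := by
  have hx₁ : x + 1 ≠ 0 := by simpa using add_natCast_ne_zero hx 1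
  have hb₀ : 1 + x - b ≠ 0 := by simpa using hb 0
  have hb₁ : 1 + x - b + 1 ≠ 0 := by simpa using add_natCast_ne_zero hb 1
  have hc₀ : 1 + x - c ≠ 0 := by simpa using hc 0
  have hc₁ : 1 + x - c + 1 ≠ 0 := by simpa using add_natCast_ne_zero hc 1
  rw [dixonRatio_eq, wellPoisedTerm_add_two hx hb hc, mul_left_comm]
  congr 1
  generalize 1 + x - b = u at *
  generalize 1 + x - c = v at *
  generalize (x + n) * (x + n + 1) = p, (u + n) * (u + n + 1) = q, (v + n) * (v + n + 1) = r
  generalize 2 + x - 2 * b - 2 * c = e, (2 + x - 2 * b) * (2 + x - 2 * c) = f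
  field_simp

theorem dixonCertificate_identity {x y p q e u v : ℝ} (he : e = x + 2 * p + 2 * q - 2)
    (hu : u = y + p) (hv : v = y + q) (hx₀ : x ≠ 0) (he₀ : e ≠ 0) (hu₀ : u ≠ 0) (hv₀ : v ≠ 0)
    (hu₁ : u + 1 ≠ 0) (hv₁ : v + 1 ≠ 0) :
    1 - (x + 2 * p) * (x + 2 * q) * (x + p + q - 1) * (x + p + q) * (y * (y + 1))
        / (x * e * (u * (u + 1)) * (v * (v + 1))) =
      (y - x) * ((y * (y + e + 1) / e - p * q / x) / (u * v)) -
        y / (u * v) * ((y - x + 1 - p) * (y - x + 1 - q)) *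
          (((y + 1) * (y + 1 + e + 1) / e - p * q / x) / ((u + 1) * (v + 1))) := by
  field_simp
  subst he hu hv
  ring

theorem dixonCertificate_succ_sub (h : 0 < 2 + x - 2 * b - 2 * c) (hx : ∀ m : ℕ, x ≠ -m)
    (hb : ∀ m : ℕ, 1 + x - b ≠ -m) (hc : ∀ m : ℕ, 1 + x - c ≠ -m) (n : ℕ) :
    dixonCertificate x b c (n + 1) - dixonCertificate x b c n =
      wellPoisedTerm x b c n - dixonRatio x b c * wellPoisedTerm (x + 2) b c n := by
  have hu₁ := add_natCast_ne_zero hb (n + 1)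
  have hv₁ := add_natCast_ne_zero hc (n + 1)
  have hidentity := dixonCertificate_identity (x := x) (y := x + n) (p := 1 - b) (q := 1 - c)
    (e := 2 + x - 2 * b - 2 * c) (by ring) (show 1 + x - b + n = _ by ring)
    (show 1 + x - c + n = _ by ring) (by simpa using hx 0) h.ne' (add_natCast_ne_zero hb n)
    (add_natCast_ne_zero hc n) (by simpa [add_assoc] using hu₁) (by simpa [add_assoc] using hv₁)
  have hsucc : ((n : ℝ) + 1) * wellPoisedTerm x b c (n + 1) = wellPoisedTerm x b c n *
      ((x + n) / ((1 + x - b + n) * (1 + x - c + n)) * ((b + n) * (c + n))) := by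
    rw [wellPoisedTerm_succ]
    field_simp
  simp only [dixonCertificate, Nat.cast_succ, ← add_assoc, hsucc,
    dixonRatio_mul_wellPoisedTerm_add_two hx hb hc]
  generalize 1 + x - b + (n : ℝ) = u at *
  generalize 1 + x - c + (n : ℝ) = v at *
  linear_combination (-wellPoisedTerm x b c n) * hidentity

theorem tendsto_dixonCertificate (h : 0 < 2 + x - 2 * b - 2 * c) :
    Tendsto (dixonCertificate x b c) atTop (𝓝 0) := by
  have hratio (r s : ℝ) : Tendsto (fun n : ℕ => (r + n) / (s + n)) atTop (𝓝 1) := by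
    simpa using tendsto_add_mul_div_add_mul_atTop_nhds r s 1 (one_ne_zero (α := ℝ))
  have hinv (r : ℝ) : Tendsto (fun n : ℕ => (r + n)⁻¹) atTop (𝓝 0) :=
    tendsto_inv_atTop_zero.comp
      (tendsto_atTop_add_const_left _ r tendsto_natCast_atTop_atTop)
  have hfactor := ((((hratio x (1 + x - b)).mul
    (hratio (x + (2 + x - 2 * b - 2 * c) + 1) (1 + x - c))).div_const (2 + x - 2 * b - 2 * c)).sub
    (((hinv (1 + x - b)).mul (hinv (1 + x - c))).const_mul ((1 - b) * (1 - c) / x)))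
  have hlim := ((tendsto_natCast_mul_wellPoisedTerm h).mul hfactor).neg
  rw [zero_mul, neg_zero] at hlim
  refine hlim.congr fun n => ?_
  simp only [dixonCertificate, div_eq_mul_inv, mul_inv]
  ring

theorem tsum_wellPoisedTerm_eq_dixonRatio_mul (h : 0 < 2 + x - 2 * b - 2 * c)
    (hx : ∀ m : ℕ, x ≠ -m) (hb : ∀ m : ℕ, 1 + x - b ≠ -m) (hc : ∀ m : ℕ, 1 + x - c ≠ -m) :
    ∑' n, wellPoisedTerm x b c n = dixonRatio x b c * ∑' n, wellPoisedTerm (x + 2) b c n := by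
  have hsum := summable_wellPoisedTerm h
  have hsum₂ := (summable_wellPoisedTerm (x := x + 2) (b := b) (c := c) (by linarith)).mul_left
    (dixonRatio x b c)
  have hlim := (hsum.sub hsum₂).hasSum.tendsto_sum_nat
  simp only [← dixonCertificate_succ_sub h hx hb hc, Finset.sum_range_sub] at hlim
  have hlim₀ := (tendsto_dixonCertificate h).sub_const (dixonCertificate x b c 0)
  have hzero : dixonCertificate x b c 0 = 0 := by simp [dixonCertificate]
  have heq := tendsto_nhds_unique hlim hlim₀
  simp only [dixonCertificate_succ_sub h hx hb hc] at heq
  rw [hsum.tsum_sub hsum₂, tsum_mul_left, hzero, sub_zero] at heq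
  exact sub_eq_zero.1 heq

end Telescoping

section DixonTheorem

variable {x b c : ℝ}

theorem prod_range_dixonRatio (x b c : ℝ) (k : ℕ) :
    ∏ j ∈ Finset.range k, dixonRatio (x + 2 * j) b c =
      ∏ i, poch (dixonNum x b c i) k / poch (dixonDen x b c i) k := by
  have hnum (j : ℕ) (i : Fin 5) : dixonNum (x + 2 * j) b c i = dixonNum x b c i + j := by
    fin_cases i <;> simp [dixonNum] <;> ring
  have hden (j : ℕ) (i : Fin 5) : dixonDen (x + 2 * j) b c i = dixonDen x b c i + j := by
    fin_cases i <;> simp [dixonDen] <;> ring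
  simp only [dixonRatio, hnum, hden]
  rw [Finset.prod_comm]
  exact Finset.prod_congr rfl fun i _ => Finset.prod_div_distrib _ _

theorem tsum_wellPoisedTerm_eq_prod_mul (h : 0 < 2 + x - 2 * b - 2 * c)
    (hx : ∀ m : ℕ, x ≠ -m) (hb : ∀ m : ℕ, 1 + x - b ≠ -m) (hc : ∀ m : ℕ, 1 + x - c ≠ -m)
    (k : ℕ) :
    ∑' n, wellPoisedTerm x b c n =
      (∏ j ∈ Finset.range k, dixonRatio (x + 2 * j) b c) *
        ∑' n, wellPoisedTerm (x + 2 * k) b c n := by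
  induction k with
  | zero => simp
  | succ k ih =>
    have hshift {s t : ℝ} (hs : ∀ m : ℕ, s ≠ -m) (hst : t = s + 2 * k) (m : ℕ) : t ≠ -m := by
      simpa [hst] using add_natCast_ne_neg_natCast hs (2 * k) m
    have hk : (0 : ℝ) ≤ k := k.cast_nonneg
    rw [ih, Finset.prod_range_succ, mul_assoc, tsum_wellPoisedTerm_eq_dixonRatio_mul
      (by linarith) (hshift hx rfl) (hshift hb (by ring)) (hshift hc (by ring)),
      Nat.cast_succ, mul_add_one, add_assoc]

theorem tsum_wellPoisedTerm_eq_prod_Gamma (h : 0 < 2 + x - 2 * b - 2 * c)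
    (hx : ∀ m : ℕ, x ≠ -m) (hb : ∀ m : ℕ, 1 + x - b ≠ -m) (hc : ∀ m : ℕ, 1 + x - c ≠ -m) :
    ∑' n, wellPoisedTerm x b c n =
      ∏ i, Real.Gamma (dixonDen x b c i) / Real.Gamma (dixonNum x b c i) := by
  have hbalanced : ∑ i, (dixonDen x b c i - dixonNum x b c i) = 0 := by
    simp only [Fin.sum_univ_five, dixonNum, dixonDen, Matrix.cons_val]
    ring
  have hprod := tendsto_prod_poch_div_poch_mul_rpow (dixonNum x b c) (dixonDen x b c)
  simp only [hbalanced, Real.rpow_zero, mul_one, ← prod_range_dixonRatio] at hprod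
  have hatTop : Tendsto (fun k : ℕ => x + 2 * (k : ℝ)) atTop atTop :=
    tendsto_atTop_add_const_left _ x
      (tendsto_natCast_atTop_atTop.const_mul_atTop (zero_lt_two' ℝ))
  have hlim := hprod.mul
    (((tendsto_tsum_wellPoisedTerm_atTop b c).comp hatTop).comp (tendsto_add_atTop_nat 1))
  rw [mul_one] at hlim
  refine tendsto_nhds_unique (tendsto_const_nhds.congr fun k => ?_) hlim
  exact tsum_wellPoisedTerm_eq_prod_mul h hx hb hc (k + 1)

theorem Gamma_half_mul_Gamma_half (s : ℝ) :
    Real.Gamma ((1 + s) / 2) * Real.Gamma (1 + s / 2) =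
      Real.Gamma (1 + s) * (2 : ℝ) ^ (-s) * √Real.pi := by
  convert Real.Gamma_mul_Gamma_add_half ((1 + s) / 2) using 3 <;> ring_nf

theorem prod_Gamma_dixonDen_div_dixonNum (hx : ∀ m : ℕ, x ≠ -m) :
    ∏ i, Real.Gamma (dixonDen x b c i) / Real.Gamma (dixonNum x b c i) =
      Real.Gamma (1 + x / 2) * Real.Gamma (1 + x - b) * Real.Gamma (1 + x - c)
          * Real.Gamma (1 + x / 2 - b - c)
        / (Real.Gamma (1 + x) * Real.Gamma (1 + x / 2 - b) * Real.Gamma (1 + x / 2 - c)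
          * Real.Gamma (1 + x - b - c)) := by
  have hG : Real.Gamma (1 + x / 2) ≠ 0 := by
    refine Real.Gamma_ne_zero fun m hm => hx (2 * (m + 1)) ?_
    push_cast
    linarith
  have e₀ := Gamma_half_mul_Gamma_half x
  have e₁ := Gamma_half_mul_Gamma_half (x - b)
  have e₂ := Gamma_half_mul_Gamma_half (x - c)
  have e₃ := Gamma_half_mul_Gamma_half (x - b - c)
  simp only [← add_sub_assoc] at e₁ e₂ e₃
  have hpow : (2 : ℝ) ^ (-(x - b)) * (2 : ℝ) ^ (-(x - c)) =
      (2 : ℝ) ^ (-x) * (2 : ℝ) ^ (-(x - b - c)) := by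
    rw [← Real.rpow_add two_pos, ← Real.rpow_add two_pos]
    ring_nf
  have hscale : (2 : ℝ) ^ (-x) * (2 : ℝ) ^ (-(x - b - c)) * (√Real.pi * √Real.pi) ≠ 0 := by
    positivity
  rw [Finset.prod_div_distrib, ← mul_div_mul_left _ _ hG]
  conv_rhs => rw [← mul_div_mul_right _ _ hscale]
  simp only [Fin.prod_univ_five, dixonNum, dixonDen, Matrix.cons_val]
  congr 1
  · linear_combination Real.Gamma (1 + x / 2) * Real.Gamma (1 + x / 2 - b - c) *
      (Real.Gamma ((1 + x - c) / 2) * Real.Gamma (1 + (x - c) / 2) * e₁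
        + Real.Gamma (1 + x - b) * (2 : ℝ) ^ (-(x - b)) * √Real.pi * e₂
        + Real.Gamma (1 + x - b) * Real.Gamma (1 + x - c) * √Real.pi ^ 2 * hpow)
  · linear_combination Real.Gamma (1 + x / 2 - b) * Real.Gamma (1 + x / 2 - c) *
      (Real.Gamma ((1 + x - b - c) / 2) * Real.Gamma (1 + (x - b - c) / 2) * e₀
        + Real.Gamma (1 + x) * (2 : ℝ) ^ (-x) * √Real.pi * e₃)

theorem hasSum_wellPoisedTerm (h : 0 < 2 + x - 2 * b - 2 * c)
    (hx : ∀ m : ℕ, x ≠ -m) (hb : ∀ m : ℕ, 1 + x - b ≠ -m) (hc : ∀ m : ℕ, 1 + x - c ≠ -m) :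
    HasSum (wellPoisedTerm x b c)
      (Real.Gamma (1 + x / 2) * Real.Gamma (1 + x - b) * Real.Gamma (1 + x - c)
          * Real.Gamma (1 + x / 2 - b - c)
        / (Real.Gamma (1 + x) * Real.Gamma (1 + x / 2 - b) * Real.Gamma (1 + x / 2 - c)
          * Real.Gamma (1 + x - b - c))) := by
  rw [← prod_Gamma_dixonDen_div_dixonNum hx, ← tsum_wellPoisedTerm_eq_prod_Gamma h hx hb hc]
  exact (summable_wellPoisedTerm h).hasSum

end DixonTheorem

theorem Gamma_one_add_mul_Gamma_one_sub {a : ℝ} (ha : a ≠ 0) :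
    Real.Gamma (1 + a) * Real.Gamma (1 - a) = Real.pi * a / Real.sin (Real.pi * a) := by
  rw [add_comm, Real.Gamma_add_one ha, mul_assoc, Real.Gamma_mul_Gamma_one_sub]
  ring

theorem Gamma_one_fourth_mul_Gamma_three_fourths :
    Real.Gamma (1 / 4) * Real.Gamma (3 / 4) = Real.pi * √2 := by
  have h := Real.Gamma_mul_Gamma_one_sub (1 / 4)
  rw [mul_one_div, Real.sin_pi_div_four, show (1 : ℝ) - 1 / 4 = 3 / 4 by norm_num] at h
  rw [h, div_div_eq_mul_div, div_eq_iff (by positivity), mul_assoc, Real.mul_self_sqrt zero_le_two]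

theorem Gamma_five_fourths_mul_Gamma_one_fourth_mul_Gamma_three_fourths_sq :
    Real.Gamma (5 / 4) * Real.Gamma (1 / 4) * Real.Gamma (3 / 4) ^ 2 = Real.pi ^ 2 / 2 := by
  rw [show (5 / 4 : ℝ) = 1 / 4 + 1 by norm_num, Real.Gamma_add_one (by norm_num)]
  calc 1 / 4 * Real.Gamma (1 / 4) * Real.Gamma (1 / 4) * Real.Gamma (3 / 4) ^ 2
      = 1 / 4 * (Real.Gamma (1 / 4) * Real.Gamma (3 / 4)) ^ 2 := by ring
    _ = Real.pi ^ 2 / 2 := by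
        rw [Gamma_one_fourth_mul_Gamma_three_fourths, mul_pow, Real.sq_sqrt zero_le_two]
        ring

theorem Gamma_three_halves_mul_Gamma_one_half :
    Real.Gamma (3 / 2) * Real.Gamma (1 / 2) = Real.pi / 2 := by
  rw [show (3 / 2 : ℝ) = 1 / 2 + 1 by norm_num, Real.Gamma_add_one (by norm_num),
    Real.Gamma_one_half_eq, mul_assoc, Real.mul_self_sqrt Real.pi_pos.le]
  ring

theorem hasSum_wellPoisedTerm_one_half {a : ℝ} (ha : ∀ m : ℤ, a ≠ m) :
    HasSum (wellPoisedTerm (1 / 2) (1 / 2 - a) (a + 1 / 2))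
      (Real.Gamma (5 / 4) * Real.Gamma (1 + a) * Real.Gamma (1 - a) * Real.Gamma (1 / 4)
        / (Real.Gamma (3 / 2) * Real.Gamma (a + 3 / 4) * Real.Gamma (3 / 4 - a)
          * Real.Gamma (1 / 2))) := by
  convert hasSum_wellPoisedTerm (x := 1 / 2) (b := 1 / 2 - a) (c := a + 1 / 2) (by linarith)
    (ne_neg_natCast_of_pos one_half_pos)
    (fun m h => ha (-(m + 1)) (by push_cast; linarith))
    (fun m h => ha (m + 1) (by push_cast; linarith)) using 3 <;> ring_nf

theorem threeF2_K3_value_general (a : ℝ) (ha : ∀ m : ℤ, a ≠ m)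
    (hsub : ∀ m : ℕ, 3/4 - a ≠ -m) (hadd : ∀ m : ℕ, a + 3/4 ≠ -m) :
    HasSum (fun n : ℕ =>
        poch (1/2) n * poch (1/2 - a) n * poch (a + 1/2) n
          / (poch (1 - a) n * poch (a + 1) n * (Nat.factorial n)))
      (Real.pi^2 * a * (1 / Real.sin (Real.pi * a))
        / ((Real.Gamma (3/4))^2 * Real.Gamma (3/4 - a) * Real.Gamma (a + 3/4))) := by
  have hdixon := hasSum_wellPoisedTerm_one_half ha
  have hconst := Gamma_five_fourths_mul_Gamma_one_fourth_mul_Gamma_three_fourths_sq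
  have hhalf := Gamma_three_halves_mul_Gamma_one_half
  have hreflection := Gamma_one_add_mul_Gamma_one_sub (a := a) (mod_cast ha 0)
  have hΓ {s : ℝ} (hs : 0 < s) : Real.Gamma s ≠ 0 := (Real.Gamma_pos_of_pos hs).ne'
  have hΓsub := Real.Gamma_ne_zero hsub
  have hΓadd := Real.Gamma_ne_zero hadd
  have hden₁ : Real.Gamma (3 / 4) ^ 2 * Real.Gamma (3 / 4 - a) * Real.Gamma (a + 3 / 4) ≠ 0 :=
    mul_ne_zero (mul_ne_zero (pow_ne_zero 2 (hΓ (by norm_num))) hΓsub) hΓadd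
  have hden₂ : Real.Gamma (3 / 2) * Real.Gamma (a + 3 / 4) * Real.Gamma (3 / 4 - a)
      * Real.Gamma (1 / 2) ≠ 0 :=
    mul_ne_zero (mul_ne_zero (mul_ne_zero (hΓ (by norm_num)) hΓadd) hΓsub) (hΓ one_half_pos)
  convert hdixon using 1
  · ext n
    rw [wellPoisedTerm, show (1 : ℝ) + 1 / 2 - (1 / 2 - a) = a + 1 by ring,
      show (1 : ℝ) + 1 / 2 - (a + 1 / 2) = 1 - a by ring, mul_comm (poch (a + 1) n)]
  · rw [div_eq_div_iff hden₁ hden₂]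
    linear_combination Real.Gamma (3 / 4 - a) * Real.Gamma (a + 3 / 4) *
      (Real.pi * (Real.pi * a / Real.sin (Real.pi * a)) * hhalf
        - Real.Gamma (1 + a) * Real.Gamma (1 - a) * hconst - Real.pi ^ 2 / 2 * hreflection)

theorem threeF2_K3_value (a : ℝ) (ha0 : 0 < a) (ha1 : a < 1/4) :
    ∑' n : ℕ,
        poch (1/2) n * poch (1/2 - a) n * poch (a + 1/2) n
          / (poch (1 - a) n * poch (a + 1) n * (Nat.factorial n)) =
      Real.pi^2 * a * (1 / Real.sin (Real.pi * a))
        / ((Real.Gamma (3/4))^2 * Real.Gamma (3/4 - a) * Real.Gamma (a + 3/4)) := by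
  have ha (m : ℤ) : a ≠ m := by
    rintro rfl
    have h₀ : 0 < m := by exact_mod_cast ha0
    have h₁ : m < 1 := by exact_mod_cast ha1.trans (by norm_num : (1 / 4 : ℝ) < 1)
    omega
  exact (threeF2_K3_value_general a ha (ne_neg_natCast_of_pos (by linarith))
    (ne_neg_natCast_of_pos (by linarith))).tsum_eq
end
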